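/- arXiv:2401.15588 — 2 statements merged into one kernel-verified Lean document; each statement's English description precedes it below -/
import Mathlib

section
/- A tempered distribution on ℝ supported at the origin is a finite linear combination of derivatives of the Dirac delta measure at 0. -/
/-- A tempered distribution `α` vanishes on an open set `U` if it kills every Schwartz
function whose (closed) support is contained in `U`. -/
def DistVanishesOn (α : SchwartzMap ℝ ℂ →L[ℂ] ℂ) (U : Set ℝ) : Prop :=
  ∀ φ : SchwartzMap ℝ ℂ, tsupport (φ : ℝ → ℂ) ⊆ U → α φ = 0

/-- The support of a tempered distribution. -/
def DistSupport (α : SchwartzMap ℝ ℂ →L[ℂ] ℂ) : Set ℝ :=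
  {x : ℝ | ∀ U : Set ℝ, IsOpen U → x ∈ U → ¬ DistVanishesOn α U}

/-!
Let `ψ` be a smooth cutoff equal to `1` near the origin. For a test function `φ` the dilated
cutoffs `ψ (t x)` satisfy `ψ (t x) φ → φ` in the Schwartz space as `t → 0`, so a distribution also
kills the test functions of non-compact support that live off its support. If `φ` vanishes at `0`
to an order exceeding the order `N` of the distribution, then Taylor's estimate shows that
`ψ (x / t) φ → 0` in all seminorms with at most `N` derivatives, while `φ - ψ (x / t) φ` lives off
the origin. Hence a distribution supported at the origin kills `φ` as soon as the jet of order `N`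
of `φ` at `0` vanishes, and therefore factors through that jet.
-/

open Filter Topology Distribution
open scoped ContDiff Manifold SchwartzMap

variable {𝕜 E F V : Type*} [NormedAddCommGroup E] [NormedSpace ℝ E] [NormedAddCommGroup F]
  [NormedSpace ℝ F]

section HasBoundedDerivs

/-- Smooth functions all of whose derivatives, including the one of order zero, are bounded. The
cutoffs used below and their complements are of this kind. -/
structure HasBoundedDerivs (g : E → F) : Prop where
  contDiff : ContDiff ℝ ∞ g
  bounded (n : ℕ) : ∃ C, ∀ x, ‖iteratedFDeriv ℝ n g x‖ ≤ C

namespace HasBoundedDerivs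

variable {g h : E → F}

theorem hasTemperateGrowth (hg : HasBoundedDerivs g) : g.HasTemperateGrowth :=
  ⟨hg.contDiff, fun n ↦ (hg.bounded n).elim fun C hC ↦ ⟨0, C, by simpa using hC⟩⟩

theorem comp_const_smul (hg : HasBoundedDerivs g) (c : ℝ) :
    HasBoundedDerivs fun x ↦ g (c • x) where
  contDiff := hg.contDiff.comp (contDiff_const_smul c)
  bounded n := by
    obtain ⟨C, hC⟩ := hg.bounded n
    refine ⟨|c| ^ n * C, fun x ↦ ?_⟩
    rw [iteratedFDeriv_comp_const_smul c (hg.contDiff.of_le (mod_cast le_top)), norm_smul,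
      norm_pow, Real.norm_eq_abs]
    gcongr
    exact hC _

theorem const (v : F) : HasBoundedDerivs fun _ : E ↦ v where
  contDiff := contDiff_const
  bounded n := by
    refine ⟨‖v‖, fun x ↦ ?_⟩
    rcases eq_or_ne n 0 with rfl | hn
    · simp
    · simp [iteratedFDeriv_const_of_ne hn]

theorem sub (hg : HasBoundedDerivs g) (hh : HasBoundedDerivs h) :
    HasBoundedDerivs fun x ↦ g x - h x where
  contDiff := hg.contDiff.sub hh.contDiff
  bounded n := by
    obtain ⟨C, hC⟩ := hg.bounded n
    obtain ⟨D, hD⟩ := hh.bounded n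
    refine ⟨C + D, fun x ↦ ?_⟩
    rw [fun_iteratedFDeriv_sub_apply (hg.contDiff.of_le (mod_cast le_top)).contDiffAt
      (hh.contDiff.of_le (mod_cast le_top)).contDiffAt]
    exact (norm_sub_le _ _).trans (add_le_add (hC x) (hD x))

theorem of_hasCompactSupport (hg : ContDiff ℝ ∞ g) (hc : HasCompactSupport g) :
    HasBoundedDerivs g where
  contDiff := hg
  bounded n := (hg.continuous_iteratedFDeriv (mod_cast le_top)).bounded_above_of_compact_support
    (hc.iteratedFDeriv n)

theorem exists_norm_iteratedFDeriv_dilation_smul_le {g : E → ℝ} (hg : HasBoundedDerivs g) (n : ℕ) :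
    ∃ B : ℕ → ℝ, (∀ i, 0 ≤ B i) ∧ ∀ (c : ℝ) {u : E → F} (_ : ContDiff ℝ ∞ u) (x : E),
      ‖iteratedFDeriv ℝ n (fun y ↦ g (c • y) • u y) x‖ ≤
        ∑ i ∈ Finset.range (n + 1), B i * (|c| ^ i * ‖iteratedFDeriv ℝ (n - i) u x‖) := by
  choose C hC using hg.bounded
  have hC₀ (i : ℕ) : 0 ≤ C i := (norm_nonneg _).trans (hC i 0)
  refine ⟨fun i ↦ n.choose i * C i, fun i ↦ mul_nonneg (by positivity) (hC₀ i),
    fun c u hu x ↦ ?_⟩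
  refine (norm_iteratedFDeriv_smul_le (hg.comp_const_smul c).contDiff hu x
    (mod_cast le_top)).trans (Finset.sum_le_sum fun i _ ↦ ?_)
  rw [iteratedFDeriv_comp_const_smul c (hg.contDiff.of_le (mod_cast le_top)), norm_smul,
    norm_pow, Real.norm_eq_abs]
  calc (n.choose i : ℝ) * (|c| ^ i * ‖iteratedFDeriv ℝ i g (c • x)‖) *
        ‖iteratedFDeriv ℝ (n - i) u x‖
      ≤ n.choose i * (|c| ^ i * C i) * ‖iteratedFDeriv ℝ (n - i) u x‖ := by gcongr; exact hC i _
    _ = n.choose i * C i * (|c| ^ i * ‖iteratedFDeriv ℝ (n - i) u x‖) := by ring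

end HasBoundedDerivs

end HasBoundedDerivs

section Dilation

variable {g : E → ℝ} [NormedField 𝕜] [NormedSpace 𝕜 F] [SMulCommClass ℝ 𝕜 F]

theorem tendsto_zero_of_le_const_mul {f : ℝ → ℝ} {C : ℝ} (hf : ∀ t, 0 ≤ f t)
    (h : ∀ t, 0 < t → t ≤ 1 → f t ≤ C * t) : Tendsto f (𝓝[>] 0) (𝓝 0) := by
  have hC : Tendsto (fun t ↦ C * t) (𝓝[>] 0) (𝓝 0) := by
    simpa using ((continuous_const_mul C).tendsto 0).mono_left nhdsWithin_le_nhds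
  refine squeeze_zero' (.of_forall hf) ?_ hC
  filter_upwards [Ioc_mem_nhdsGT one_pos] with t ht using h t ht.1 ht.2

theorem seminorm_smulLeftCLM_le_of_tsupport (hg : g.HasTemperateGrowth) (φ : 𝓢(E, F))
    {k n : ℕ} {M : ℝ} (hM : 0 ≤ M)
    (h : ∀ x ∈ tsupport g, ‖x‖ ^ k * ‖iteratedFDeriv ℝ n (fun y ↦ g y • φ y) x‖ ≤ M) :
    SchwartzMap.seminorm 𝕜 k n (SchwartzMap.smulLeftCLM F g φ) ≤ M := by
  refine SchwartzMap.seminorm_le_bound 𝕜 k n _ hM fun x ↦ ?_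
  rw [SchwartzMap.smulLeftCLM_apply hg]
  by_cases hx : x ∈ tsupport g
  · exact h x hx
  · have hx' : x ∉ tsupport fun y ↦ g y • φ y := fun hx' ↦ hx (tsupport_smul_subset_left _ _ hx')
    have : iteratedFDeriv ℝ n (fun y ↦ g y • φ y) x = 0 :=
      image_eq_zero_of_notMem_tsupport fun h ↦ hx' (tsupport_iteratedFDeriv_subset n h)
    simpa [this] using hM

theorem tendsto_seminorm_dilation_nhdsGT_zero (hg : HasBoundedDerivs g) (hg₀ : 0 ∉ tsupport g)
    (φ : 𝓢(E, F)) (k n : ℕ) :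
    Tendsto (fun t : ℝ ↦ SchwartzMap.seminorm 𝕜 k n (SchwartzMap.smulLeftCLM F (g <| t • ·) φ))
      (𝓝[>] 0) (𝓝 0) := by
  obtain ⟨B, hB, hgB⟩ := hg.exists_norm_iteratedFDeriv_dilation_smul_le (F := F) n
  obtain ⟨r, hr, hgr⟩ := Metric.isOpen_iff.1 (isClosed_tsupport g).isOpen_compl 0 hg₀
  refine tendsto_zero_of_le_const_mul
    (C := r⁻¹ * ∑ i ∈ Finset.range (n + 1), B i * SchwartzMap.seminorm ℝ (k + 1) (n - i) φ)
    (fun _ ↦ apply_nonneg _ _) fun t ht₀ ht₁ ↦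
    seminorm_smulLeftCLM_le_of_tsupport (hg.comp_const_smul t).hasTemperateGrowth φ
      (mul_nonneg (mul_nonneg (by positivity)
        (Finset.sum_nonneg fun i _ ↦ mul_nonneg (hB i) (apply_nonneg _ _))) ht₀.le)
      fun x hx ↦ ?_
  have hrx : 1 ≤ r⁻¹ * (t * ‖x‖) := by
    have htx : t • x ∈ tsupport g := tsupport_comp_subset_preimage g (continuous_const_smul t) hx
    have : r ≤ ‖t • x‖ := by simpa using fun h ↦ hgr h htx
    rwa [norm_smul, Real.norm_of_nonneg ht₀.le, ← one_mul r, ← le_inv_mul_iff₀' hr] at this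
  calc ‖x‖ ^ k * ‖iteratedFDeriv ℝ n (fun y ↦ g (t • y) • φ y) x‖
      ≤ ‖x‖ ^ k * ‖iteratedFDeriv ℝ n (fun y ↦ g (t • y) • φ y) x‖ * (r⁻¹ * (t * ‖x‖)) :=
        le_mul_of_one_le_right (by positivity) hrx
    _ = r⁻¹ * (‖x‖ ^ (k + 1) * ‖iteratedFDeriv ℝ n (fun y ↦ g (t • y) • φ y) x‖) * t := by ring
    _ ≤ r⁻¹ * (∑ i ∈ Finset.range (n + 1), B i * SchwartzMap.seminorm ℝ (k + 1) (n - i) φ) * t := by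
        gcongr
        refine (mul_le_mul_of_nonneg_left (hgB t (φ.smooth ⊤) x) (by positivity)).trans ?_
        rw [Finset.mul_sum]
        refine Finset.sum_le_sum fun i _ ↦ ?_
        rw [mul_left_comm]
        refine mul_le_mul_of_nonneg_left ?_ (hB i)
        refine le_trans ?_ (φ.le_seminorm ℝ (k + 1) (n - i) x)
        gcongr
        exact mul_le_of_le_one_left (norm_nonneg _)
          (pow_le_one₀ (abs_nonneg t) (abs_le.2 ⟨by linarith, ht₁⟩))

theorem tendsto_smulLeftCLM_dilation_nhdsGT_zero (hg : HasBoundedDerivs g) (hg₁ : g =ᶠ[𝓝 0] 1)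
    (φ : 𝓢(E, F)) :
    Tendsto (fun t : ℝ ↦ SchwartzMap.smulLeftCLM F (g <| t • ·) φ) (𝓝[>] 0) (𝓝 φ) := by
  have hsub : HasBoundedDerivs fun x ↦ g x - 1 := hg.sub (.const 1)
  have hsub₀ : (0 : E) ∉ tsupport fun x ↦ g x - 1 := by
    rw [notMem_tsupport_iff_eventuallyEq]
    filter_upwards [hg₁] with x hx
    simp [hx]
  have heq (t : ℝ) : SchwartzMap.smulLeftCLM F (g <| t • ·) φ - φ =
      SchwartzMap.smulLeftCLM F (fun x ↦ g (t • x) - 1) φ := by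
    ext x
    simp [(hg.comp_const_smul t).hasTemperateGrowth, (hsub.comp_const_smul t).hasTemperateGrowth,
      sub_smul]
  refine ((schwartz_withSeminorms ℝ E F).tendsto_nhds _ φ).2 fun p ε hε ↦ ?_
  simp only [heq]
  exact (tendsto_seminorm_dilation_nhdsGT_zero hsub hsub₀ φ p.1 p.2).eventually (gt_mem_nhds hε)

theorem norm_iteratedFDeriv_le_mul_norm_pow {u : E → F} {n : ℕ} {M : ℝ} (hu : ContDiff ℝ n u)
    (hu₀ : ∀ i < n, iteratedFDeriv ℝ i u 0 = 0) (hM : ∀ x, ‖iteratedFDeriv ℝ n u x‖ ≤ M)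
    {j p : ℕ} (hjp : j + p = n) (x : E) : ‖iteratedFDeriv ℝ j u x‖ ≤ M * ‖x‖ ^ p := by
  induction p generalizing j x with
  | zero => obtain rfl : j = n := hjp; simpa using hM x
  | succ p ih =>
    have hM₀ : 0 ≤ M := (norm_nonneg _).trans (hM 0)
    have hj : j < n := by lia
    have hderiv : ∀ y ∈ Metric.closedBall 0 ‖x‖,
        ‖fderiv ℝ (iteratedFDeriv ℝ j u) y‖ ≤ M * ‖x‖ ^ p := fun y hy ↦ by
      rw [norm_fderiv_iteratedFDeriv]
      refine (ih (by lia) y).trans ?_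
      gcongr
      exact mem_closedBall_zero_iff.1 hy
    have hmvt := (convex_closedBall (0 : E) ‖x‖).norm_image_sub_le_of_norm_fderiv_le
      (fun y _ ↦ hu.differentiable_iteratedFDeriv (mod_cast hj) y) hderiv
      (Metric.mem_closedBall_self (norm_nonneg x)) (mem_closedBall_zero_iff.2 le_rfl)
    simpa [hu₀ j hj, pow_succ, mul_assoc] using hmvt

theorem inv_pow_mul_norm_iteratedFDeriv_le {u : E → F} {N n i : ℕ} {M R t : ℝ}
    (hu : ContDiff ℝ (N + 1 : ℕ) u) (hu₀ : ∀ j ≤ N, iteratedFDeriv ℝ j u 0 = 0)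
    (hM : ∀ x, ‖iteratedFDeriv ℝ (N + 1) u x‖ ≤ M) (hn : n ≤ N) (hi : i ≤ n)
    (ht₀ : 0 < t) (ht₁ : t ≤ 1) {x : E} (hx : ‖x‖ ≤ t * R) :
    t⁻¹ ^ i * ‖iteratedFDeriv ℝ (n - i) u x‖ ≤ M * R ^ (N + 1 - n + i) * t := by
  have hM₀ : 0 ≤ M := (norm_nonneg _).trans (hM 0)
  have hR : 0 ≤ R := nonneg_of_mul_nonneg_right ((norm_nonneg x).trans hx) ht₀
  have htaylor : ‖iteratedFDeriv ℝ (n - i) u x‖ ≤ M * ‖x‖ ^ (N + 1 - n + i) :=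
    norm_iteratedFDeriv_le_mul_norm_pow hu (fun j hj ↦ hu₀ j (Nat.le_of_lt_succ hj)) hM
      (by lia) x
  calc t⁻¹ ^ i * ‖iteratedFDeriv ℝ (n - i) u x‖
      ≤ t⁻¹ ^ i * (M * (t * R) ^ (N + 1 - n + i)) := by grw [htaylor, hx]
    _ = M * R ^ (N + 1 - n + i) * t ^ (N + 1 - n) := by
        rw [mul_pow, pow_add t, inv_pow]
        field_simp
    _ ≤ M * R ^ (N + 1 - n + i) * t := by
        gcongr
        exact pow_le_of_le_one ht₀.le ht₁ (by lia)

theorem tendsto_seminorm_inv_dilation_nhdsGT_zero (hg : ContDiff ℝ ∞ g)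
    (hgc : HasCompactSupport g) (φ : 𝓢(E, F)) {N : ℕ}
    (hφ : ∀ j ≤ N, iteratedFDeriv ℝ j φ 0 = 0) (k : ℕ) {n : ℕ} (hn : n ≤ N) :
    Tendsto (fun t : ℝ ↦ SchwartzMap.seminorm 𝕜 k n (SchwartzMap.smulLeftCLM F (g <| t⁻¹ • ·) φ))
      (𝓝[>] 0) (𝓝 0) := by
  have hg' : HasBoundedDerivs g := .of_hasCompactSupport hg hgc
  obtain ⟨B, hB, hgB⟩ := hg'.exists_norm_iteratedFDeriv_dilation_smul_le (F := F) n
  obtain ⟨R, hR, hgR⟩ := hgc.isBounded.exists_pos_norm_le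
  set M := SchwartzMap.seminorm ℝ 0 (N + 1) φ
  have : 0 ≤ M := apply_nonneg _ _
  refine tendsto_zero_of_le_const_mul
    (C := R ^ k * ∑ i ∈ Finset.range (n + 1), B i * (M * R ^ (N + 1 - n + i)))
    (fun _ ↦ apply_nonneg _ _) fun t ht₀ ht₁ ↦
    seminorm_smulLeftCLM_le_of_tsupport (hg'.comp_const_smul t⁻¹).hasTemperateGrowth φ
      (mul_nonneg (mul_nonneg (by positivity)
        (Finset.sum_nonneg fun i _ ↦ mul_nonneg (hB i) (by positivity))) ht₀.le)
      fun x hx ↦ ?_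
  have hxR : ‖x‖ ≤ t * R := by
    have := hgR _ (tsupport_comp_subset_preimage g (continuous_const_smul t⁻¹) hx)
    rwa [norm_smul, norm_inv, Real.norm_of_nonneg ht₀.le, inv_mul_le_iff₀ ht₀] at this
  calc ‖x‖ ^ k * ‖iteratedFDeriv ℝ n (fun y ↦ g (t⁻¹ • y) • φ y) x‖
      ≤ R ^ k * ∑ i ∈ Finset.range (n + 1), B i * (M * R ^ (N + 1 - n + i) * t) := by
        gcongr
        · exact hxR.trans (mul_le_of_le_one_left hR.le ht₁)
        · refine (hgB t⁻¹ (φ.smooth ⊤) x).trans (Finset.sum_le_sum fun i hi ↦ ?_)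
          rw [abs_of_pos (inv_pos.2 ht₀)]
          exact mul_le_mul_of_nonneg_left
            (inv_pow_mul_norm_iteratedFDeriv_le (φ.smooth _) hφ
              (φ.norm_iteratedFDeriv_le_seminorm ℝ _) hn (Finset.mem_range_succ_iff.1 hi)
              ht₀ ht₁ hxR) (hB i)
    _ = R ^ k * (∑ i ∈ Finset.range (n + 1), B i * (M * R ^ (N + 1 - n + i))) * t := by
        simp only [← mul_assoc, ← Finset.sum_mul]

end Dilation

section Support

variable [NormedField 𝕜] [NormedSpace 𝕜 F] [SMulCommClass ℝ 𝕜 F]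

theorem exists_eq_sum_tsupport_subset [FiniteDimensional ℝ E] {ι : Type*} {U : ι → Set E}
    (hU : ∀ i, IsOpen (U i)) {φ : 𝓢(E, F)} (hφ : HasCompactSupport φ)
    (hφU : tsupport φ ⊆ ⋃ i, U i) :
    ∃ (s : Finset ι) (f : ι → 𝓢(E, F)), φ = ∑ i ∈ s, f i ∧ ∀ i, tsupport (f i) ⊆ U i := by
  obtain ⟨ρ, hρ⟩ := SmoothPartitionOfUnity.exists_isSubordinate 𝓘(ℝ, E) (isClosed_tsupport φ)
    U hU hφU
  have hfin := ρ.locallyFinite.finite_nonempty_inter_compact hφ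
  let f (i : ι) : 𝓢(E, F) :=
    (hφ.smul_left (f := ρ i)).toSchwartzMap ((ρ i).contMDiff.contDiff.smul (φ.smooth ⊤))
  refine ⟨hfin.toFinset, f, ?_, fun i ↦ (tsupport_smul_subset_left _ _).trans (hρ i)⟩
  ext x
  rw [FunLike.coe_sum, Finset.sum_apply]
  change φ x = ∑ i ∈ hfin.toFinset, ρ i x • φ x
  rw [← Finset.sum_smul]
  by_cases hx : x ∈ tsupport φ
  · rw [ρ.sum_finsupport' x hx, one_smul]
    intro i hi
    exact hfin.mem_toFinset.2 ⟨x, (ρ.mem_finsupport x).1 hi, hx⟩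
  · simp [image_eq_zero_of_notMem_tsupport hx]

variable [FiniteDimensional ℝ E] [AddCommGroup V] [Module 𝕜 V] [TopologicalSpace V]

theorem map_eq_zero_of_hasCompactSupport (α : 𝓢(E, F) →L[𝕜] V) {φ : 𝓢(E, F)}
    (hφ : HasCompactSupport φ) (hα : tsupport φ ⊆ (dsupport α)ᶜ) : α φ = 0 := by
  rw [dsupport_compl_eq, Set.sUnion_eq_iUnion] at hα
  obtain ⟨s, f, rfl, hf⟩ := exists_eq_sum_tsupport_subset (fun a ↦ a.2.2) hφ hα
  rw [map_sum]
  exact Finset.sum_eq_zero fun a _ ↦ a.2.1 _ (hf a)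

theorem isVanishingOn_compl_dsupport [T2Space V] (α : 𝓢(E, F) →L[𝕜] V) :
    IsVanishingOn α (dsupport α)ᶜ := by
  intro φ hφ
  let ψ : ContDiffBump (0 : E) := default
  have hψ : HasBoundedDerivs ψ := .of_hasCompactSupport ψ.contDiff ψ.hasCompactSupport
  have hlim := (α.continuous.tendsto φ).comp
    (tendsto_smulLeftCLM_dilation_nhdsGT_zero hψ ψ.eventuallyEq_one φ)
  refine tendsto_nhds_unique (hlim.congr' ?_) tendsto_const_nhds
  filter_upwards [self_mem_nhdsWithin] with t ht
  have hsupp := SchwartzMap.tsupport_smulLeftCLM_subset (fun x ↦ ψ (t • x)) φ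
  refine map_eq_zero_of_hasCompactSupport α ?_ (hsupp.trans (Set.inter_subset_left.trans hφ))
  exact (ψ.hasCompactSupport.comp_smul (ne_of_gt ht)).of_isClosed_subset (isClosed_tsupport _)
    (hsupp.trans Set.inter_subset_right)

end Support

section Jet

variable [NontriviallyNormedField 𝕜] [NormedSpace 𝕜 F] [SMulCommClass ℝ 𝕜 F]
  [NormedAddCommGroup V] [NormedSpace 𝕜 V]

theorem exists_norm_le_mul_sum_seminorm (α : 𝓢(E, F) →L[𝕜] V) :
    ∃ (s : Finset (ℕ × ℕ)) (C : ℝ), ∀ φ,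
      ‖α φ‖ ≤ C * ∑ p ∈ s, SchwartzMap.seminorm 𝕜 p.1 p.2 φ := by
  obtain ⟨s, C, -, hC⟩ := Seminorm.bound_of_continuous (schwartz_withSeminorms 𝕜 E F)
    ((normSeminorm 𝕜 V).comp α.toLinearMap) (continuous_norm.comp α.continuous)
  refine ⟨s, C, fun φ ↦ (hC φ).trans (mul_le_mul_of_nonneg_left ?_ C.2)⟩
  calc s.sup (schwartzSeminormFamily 𝕜 E F) φ ≤ (∑ p ∈ s, schwartzSeminormFamily 𝕜 E F p) φ :=
        Seminorm.finset_sup_le_sum _ s φ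
    _ = ∑ p ∈ s, SchwartzMap.seminorm 𝕜 p.1 p.2 φ := by
        rw [FunLike.coe_sum, Finset.sum_apply]; rfl

theorem exists_forall_iteratedFDeriv_eq_zero_imp [FiniteDimensional ℝ E] (α : 𝓢(E, F) →L[𝕜] V)
    (hα : dsupport α ⊆ {0}) :
    ∃ N : ℕ, ∀ φ : 𝓢(E, F), (∀ j ≤ N, iteratedFDeriv ℝ j φ 0 = 0) → α φ = 0 := by
  obtain ⟨s, C, hC⟩ := exists_norm_le_mul_sum_seminorm α
  refine ⟨s.sup Prod.snd, fun φ hφ ↦ ?_⟩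
  let ψ : ContDiffBump (0 : E) := default
  have hψ : HasBoundedDerivs ψ := .of_hasCompactSupport ψ.contDiff ψ.hasCompactSupport
  have heq (t : ℝ) : α (SchwartzMap.smulLeftCLM F (fun x ↦ ψ (t⁻¹ • x)) φ) = α φ := by
    rw [← sub_eq_zero, ← map_sub]
    refine isVanishingOn_compl_dsupport α _ ?_
    refine (Set.subset_compl_singleton_iff.2 ?_).trans (Set.compl_subset_compl.2 hα)
    rw [notMem_tsupport_iff_eventuallyEq]
    have hev : ∀ᶠ x in 𝓝 (0 : E), ψ (t⁻¹ • x) = 1 :=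
      (continuous_const_smul t⁻¹).tendsto' 0 0 (smul_zero _) |>.eventually ψ.eventuallyEq_one
    filter_upwards [hev] with x hx
    simp [(hψ.comp_const_smul t⁻¹).hasTemperateGrowth, hx]
  have hlim : Tendsto (fun t : ℝ ↦ C * ∑ p ∈ s, SchwartzMap.seminorm 𝕜 p.1 p.2
      (SchwartzMap.smulLeftCLM F (fun x ↦ ψ (t⁻¹ • x)) φ)) (𝓝[>] 0) (𝓝 0) := by
    simpa using (tendsto_finsetSum s fun p hp ↦ tendsto_seminorm_inv_dilation_nhdsGT_zero
      ψ.contDiff ψ.hasCompactSupport φ hφ p.1 (Finset.le_sup hp)).const_mul C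
  exact norm_le_zero_iff.1 (ge_of_tendsto' hlim fun t ↦ heq t ▸ hC _)

variable (𝕜 E F) in
/-- The jet of order `N` at the origin of a Schwartz function: the tuple of its iterated derivatives
of orders `0, …, N` at `0`. -/
noncomputable def jetAtZero (N : ℕ) :
    𝓢(E, F) →ₗ[𝕜] (k : Fin (N + 1)) → E [×k]→L[ℝ] F where
  toFun φ k := iteratedFDeriv ℝ k φ 0
  map_add' φ ψ := by
    ext1 k
    exact iteratedFDeriv_add_apply (φ.smooth k).contDiffAt (ψ.smooth k).contDiffAt
  map_smul' c φ := by
    ext1 k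
    exact iteratedFDeriv_const_smul_apply (φ.smooth k).contDiffAt

theorem exists_linearMap_comp_eq_of_ker_le_ker {K M₁ M₂ M₃ : Type*} [DivisionRing K]
    [AddCommGroup M₁] [Module K M₁] [AddCommGroup M₂] [Module K M₂] [AddCommGroup M₃] [Module K M₃]
    {f : M₁ →ₗ[K] M₂} {g : M₁ →ₗ[K] M₃} (h : LinearMap.ker f ≤ LinearMap.ker g) :
    ∃ T : M₂ →ₗ[K] M₃, T ∘ₗ f = g := by
  obtain ⟨r, hr⟩ := LinearMap.exists_leftInverse_of_injective _
    (Submodule.ker_liftQ_eq_bot _ f le_rfl le_rfl)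
  refine ⟨Submodule.liftQ _ g h ∘ₗ r, LinearMap.ext fun x ↦ ?_⟩
  have hx : r (f x) = Submodule.Quotient.mk x := LinearMap.congr_fun hr (Submodule.Quotient.mk x)
  rw [LinearMap.comp_apply, LinearMap.comp_apply, hx, Submodule.liftQ_apply]

theorem tempered_distribution_supported_at_origin_general [FiniteDimensional ℝ E]
    (α : 𝓢(E, F) →L[𝕜] V) (hα : dsupport α ⊆ {0}) :
    ∃ (m : ℕ) (T : (k : ℕ) → (E [×k]→L[ℝ] F) →ₗ[𝕜] V),
      ∀ φ : 𝓢(E, F), α φ = ∑ k ∈ Finset.range (m + 1), T k (iteratedFDeriv ℝ k φ 0) := by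
  obtain ⟨N, hN⟩ := exists_forall_iteratedFDeriv_eq_zero_imp α hα
  have hker : LinearMap.ker (jetAtZero 𝕜 E F N) ≤ LinearMap.ker α.toLinearMap := fun φ hφ ↦
    hN φ fun j hj ↦ congrFun hφ ⟨j, Nat.lt_succ_of_le hj⟩
  obtain ⟨T, hT⟩ := exists_linearMap_comp_eq_of_ker_le_ker hker
  refine ⟨N, fun k ↦ if hk : k < N + 1 then
    T ∘ₗ LinearMap.single 𝕜 (fun i : Fin (N + 1) ↦ E [×i]→L[ℝ] F) ⟨k, hk⟩ else 0, fun φ ↦ ?_⟩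
  calc α φ = T (jetAtZero 𝕜 E F N φ) := (LinearMap.congr_fun hT φ).symm
    _ = ∑ i, T (Pi.single i (jetAtZero 𝕜 E F N φ i)) := by
        rw [← map_sum, Finset.univ_sum_single]
    _ = _ := by
        rw [Finset.sum_range]
        exact Finset.sum_congr rfl fun i _ ↦ by simp only [dif_pos i.2]; rfl

end Jet

theorem iteratedFDeriv_eq_iteratedDeriv_smul {𝕜 A : Type*} [NontriviallyNormedField 𝕜]
    [NormedRing A] [NormedAlgebra 𝕜 A] (u : 𝕜 → A) (k : ℕ) (x : 𝕜) :
    iteratedFDeriv 𝕜 k u x =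
      iteratedDeriv k u x • ContinuousMultilinearMap.mkPiRing 𝕜 (Fin k) (1 : A) := by
  rw [iteratedFDeriv_eq_equiv_comp]
  ext
  simp [ContinuousMultilinearMap.piFieldEquiv]

theorem distSupport_eq_dsupport (α : 𝓢(ℝ, ℂ) →L[ℂ] ℂ) : DistSupport α = dsupport α := by
  ext x
  rw [mem_dsupport_iff_not_isVanishingOn]
  exact forall_congr' fun U ↦ forall_comm

/-- A tempered distribution on `ℝ` supported at the origin is a finite linear
combination of derivatives of the Dirac delta at `0`: there are coefficients
`c 0, …, c m` with `α(φ) = ∑_{k ≤ m} c k · φ^{(k)}(0)` for all Schwartz `φ`. -/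
theorem tempered_distribution_supported_at_origin
    (α : SchwartzMap ℝ ℂ →L[ℂ] ℂ) (h : DistSupport α ⊆ {0}) :
    ∃ (m : ℕ) (c : ℕ → ℂ), ∀ φ : SchwartzMap ℝ ℂ,
      α φ = ∑ k ∈ Finset.range (m + 1), c k * ((-1 : ℂ) ^ k * iteratedDeriv k (φ : ℝ → ℂ) 0) := by
  obtain ⟨m, T, hT⟩ :=
    tempered_distribution_supported_at_origin_general α (distSupport_eq_dsupport α ▸ h)
  refine ⟨m, fun k ↦ (-1) ^ k * T k (.mkPiRing ℝ (Fin k) 1), fun φ ↦ ?_⟩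
  rw [hT]
  refine Finset.sum_congr rfl fun k _ ↦ ?_
  rw [iteratedFDeriv_eq_iteratedDeriv_smul, map_smul, smul_eq_mul, mul_mul_mul_comm, ← mul_pow,
    neg_one_mul, neg_neg, one_pow, one_mul, mul_comm]
end

section
/- The space J_0(ℝ) of smooth compactly supported functions on ℝ that vanish on a neighborhood of ℤ is dense in the space I_0(ℝ) of Schwartz functions vanishing to infinite order at every integer, with respect to the Schwartz space topology. -/
/-- The space `I₀(ℝ)` of Schwartz functions vanishing to infinite order at every integer. -/
def I0 : Set (SchwartzMap ℝ ℂ) :=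
  {f : SchwartzMap ℝ ℂ | ∀ (n : ℤ) (j : ℕ), iteratedDeriv j (f : ℝ → ℂ) (n : ℝ) = 0}

/-- The space `J₀(ℝ)` of smooth compactly supported functions vanishing in a
neighborhood of `ℤ`, viewed inside the Schwartz space. -/
def J0 : Set (SchwartzMap ℝ ℂ) :=
  {f : SchwartzMap ℝ ℂ | HasCompactSupport (f : ℝ → ℂ) ∧
    ∃ ε > 0, ∀ x : ℝ, (∃ n : ℤ, |x - (n : ℝ)| < ε) → f x = 0}

/-!
Let `χ` be a smooth cutoff equal to `1` on the `δ`-neighbourhood of `Z` and supported in its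
`3δ`-neighbourhood, with `‖Dⁱχ‖ ≤ Cᵢ δ⁻ⁱ`. If `f` is flat on `Z`, then on the support of `χ` every
derivative of `f` is `O(δᵐ)` for all `m`, so the factors `δ⁻ⁱ` produced by the Leibniz rule are
absorbed and `χ f → 0` in the Schwartz space as `δ → 0`. Thus `f` is the limit of `f - χ f`, which
vanishes near `Z`. The same cutoffs around `{0}`, with `δ → ∞`, then make the supports compact
without enlarging them.
-/

open Filter Function Set MeasureTheory Metric
open scoped Topology ContDiff SchwartzMap Convolution

section Mollification

variable {E G : Type*} [NormedAddCommGroup G] [NormedSpace ℝ G]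

lemma linearIsometryEquiv_comp_convolution_lsmul {G' : Type*} [NormedAddCommGroup G']
    [NormedSpace ℝ G'] [Sub E] [MeasurableSpace E] (e : G ≃ₗᵢ[ℝ] G') (μ : Measure E) (f : E → ℝ)
    (g : E → G) : e ∘ (f ⋆[.lsmul ℝ ℝ, μ] g) = f ⋆[.lsmul ℝ ℝ, μ] (e ∘ g) := by
  ext x
  simp only [comp_apply, convolution_def, ContinuousLinearMap.lsmul_apply, ← map_smul]
  exact (e.toContinuousLinearEquiv.integral_comp_comm _).symm

lemma norm_convolution_lsmul_le [AddCommGroup E] [MeasurableSpace E] [MeasurableAdd E]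
    [MeasurableNeg E] {μ : Measure E} [μ.IsAddLeftInvariant] [μ.IsNegInvariant] {f : E → ℝ}
    {g : E → G} (hf : ∀ x, |f x| ≤ 1) (hg : Integrable g μ) (x : E) :
    ‖(f ⋆[.lsmul ℝ ℝ, μ] g) x‖ ≤ ∫ y, ‖g y‖ ∂μ := by
  rw [← integral_sub_left_eq_self (fun y ↦ ‖g y‖) μ x]
  refine norm_integral_le_of_norm_le (hg.norm.comp_sub_left x) (.of_forall fun t ↦ ?_)
  rw [ContinuousLinearMap.lsmul_apply, norm_smul]
  exact mul_le_of_le_one_left (norm_nonneg _) (hf t)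

variable [NormedAddCommGroup E] [NormedSpace ℝ E] [MeasurableSpace E] [BorelSpace E]
  {μ : Measure E} [SFinite μ] [μ.IsAddLeftInvariant] {f : E → ℝ} {g : E → G}

lemma fderiv_convolution_lsmul (hf : LocallyIntegrable f μ) (hcg : HasCompactSupport g)
    (hg : ContDiff ℝ 1 g) :
    fderiv ℝ (f ⋆[.lsmul ℝ ℝ, μ] g) = f ⋆[.lsmul ℝ ℝ, μ] fderiv ℝ g := by
  ext1 x
  exact (hcg.hasFDerivAt_convolution_right _ hf hg x).fderiv

lemma iteratedFDeriv_convolution_lsmul (hf : LocallyIntegrable f μ) (hcg : HasCompactSupport g)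
    (hg : ContDiff ℝ ∞ g) (n : ℕ) :
    iteratedFDeriv ℝ n (f ⋆[.lsmul ℝ ℝ, μ] g) = f ⋆[.lsmul ℝ ℝ, μ] iteratedFDeriv ℝ n g := by
  induction n with
  | zero => rw [iteratedFDeriv_zero_eq_comp, iteratedFDeriv_zero_eq_comp,
      linearIsometryEquiv_comp_convolution_lsmul]
  | succ n ih =>
    rw [iteratedFDeriv_succ_eq_comp_left, iteratedFDeriv_succ_eq_comp_left, ih,
      fderiv_convolution_lsmul hf (hcg.iteratedFDeriv n)
        (hg.iteratedFDeriv_right (by exact_mod_cast le_top))]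
    exact linearIsometryEquiv_comp_convolution_lsmul
      (G := E →L[ℝ] E [×n]→L[ℝ] G) (G' := E [×(n + 1)]→L[ℝ] G) _ μ f _

end Mollification

section Cutoff

variable (E : Type*) [NormedAddCommGroup E] [NormedSpace ℝ E] [FiniteDimensional ℝ E]

lemma exists_smooth_indicator_approx :
    ∃ C : ℕ → ℝ, (∀ i, 0 ≤ C i) ∧ ∀ A : Set E, IsOpen A →
      ∃ χ : E → ℝ, ContDiff ℝ ∞ χ ∧ (∀ x, ball x 1 ⊆ A → χ x = 1) ∧
        (∀ x, Disjoint (ball x 1) A → χ x = 0) ∧ ∀ i x, ‖iteratedFDeriv ℝ i χ x‖ ≤ C i := by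
  borelize E
  let μ : Measure E := Measure.addHaar
  let φ : ContDiffBump (0 : E) := ⟨1 / 2, 1, by norm_num, by norm_num⟩
  have hφ : ContDiff ℝ ∞ (φ.normed μ) := φ.contDiff_normed
  have hcφ : HasCompactSupport (φ.normed μ) := φ.hasCompactSupport_normed
  refine ⟨fun i ↦ ∫ y, ‖iteratedFDeriv ℝ i (φ.normed μ) y‖ ∂μ,
    fun i ↦ integral_nonneg fun y ↦ norm_nonneg _, fun A hA ↦ ?_⟩
  let a : E → ℝ := A.indicator 1
  have ha : LocallyIntegrable a μ := (locallyIntegrable_const 1).indicator hA.measurableSet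
  have hflip : φ.normed μ ⋆[.lsmul ℝ ℝ, μ] a = a ⋆[.lsmul ℝ ℝ, μ] φ.normed μ := by
    rw [← convolution_flip]
    congr 1
    ext
    simp
  refine ⟨φ.normed μ ⋆[.lsmul ℝ ℝ, μ] a, ?_, fun x hx ↦ ?_, fun x hx ↦ ?_, fun i x ↦ ?_⟩
  · exact hcφ.contDiff_convolution_left _ hφ ha
  · have hball (y) (hy : y ∈ ball x φ.rOut) : a y = 1 := indicator_of_mem (hx hy) _
    have hxx := hball x (mem_ball_self φ.rOut_pos)
    rw [φ.normed_convolution_eq_right fun y hy ↦ (hball y hy).trans hxx.symm, hxx]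
  · have hball (y) (hy : y ∈ ball x φ.rOut) : a y = 0 :=
      indicator_of_notMem (hx.notMem_of_mem_left hy) _
    have hxx := hball x (mem_ball_self φ.rOut_pos)
    rw [φ.normed_convolution_eq_right fun y hy ↦ (hball y hy).trans hxx.symm, hxx]
  · rw [hflip, iteratedFDeriv_convolution_lsmul ha hcφ hφ]
    refine norm_convolution_lsmul_le (fun y ↦ ?_) ?_ x
    · by_cases hy : y ∈ A <;> simp [a, hy]
    · have hcont := hφ.continuous_iteratedFDeriv (m := i) (by exact_mod_cast le_top)
      exact hcont.integrable_of_hasCompactSupport (hcφ.iteratedFDeriv i)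

lemma exists_thickening_cutoff :
    ∃ C : ℕ → ℝ, (∀ i, 0 ≤ C i) ∧ ∀ (Z : Set E) (δ : ℝ), 0 < δ →
      ∃ χ : E → ℝ, ContDiff ℝ ∞ χ ∧ EqOn χ 1 (thickening δ Z) ∧ support χ ⊆ thickening (3 * δ) Z ∧
        ∀ i x, ‖iteratedFDeriv ℝ i χ x‖ ≤ C i / δ ^ i := by
  obtain ⟨C, hC₀, hC⟩ := exists_smooth_indicator_approx E
  refine ⟨C, hC₀, fun Z δ hδ ↦ ?_⟩
  obtain ⟨χ, hχ, hone, hzero, hbound⟩ :=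
    hC ((δ • ·) ⁻¹' thickening (2 * δ) Z) (isOpen_thickening.preimage (continuous_const_smul δ))
  have hdist {x y : E} (hy : y ∈ ball (δ⁻¹ • x) 1) : dist (δ • y) x < δ := by
    have := mul_lt_mul_of_pos_left (mem_ball.1 hy) hδ
    rwa [← Real.norm_of_nonneg hδ.le, ← dist_smul₀, Real.norm_of_nonneg hδ.le,
      smul_inv_smul₀ hδ.ne', mul_one] at this
  refine ⟨fun x ↦ χ (δ⁻¹ • x), hχ.comp (contDiff_const_smul _), fun x hx ↦ hone _ fun y hy ↦ ?_,
    fun x ↦ ?_, fun i x ↦ ?_⟩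
  · obtain ⟨z, hz, hxz⟩ := mem_thickening_iff.1 hx
    exact mem_thickening_iff.2 ⟨z, hz, by linarith [dist_triangle (δ • y) x z, hdist hy]⟩
  · refine not_imp_comm.1 fun hx ↦ hzero _ (disjoint_left.2 fun y hy hyZ ↦ hx ?_)
    obtain ⟨z, hz, hyz⟩ := mem_thickening_iff.1 hyZ
    exact mem_thickening_iff.2
      ⟨z, hz, by linarith [dist_triangle_left x z (δ • y), hdist hy]⟩
  · have hcomp := congr_fun
      (iteratedFDeriv_comp_const_smul (i := i) δ⁻¹ (hχ.of_le (by exact_mod_cast le_top))) x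
    rw [hcomp, norm_smul, norm_pow, norm_inv, Real.norm_of_nonneg hδ.le, inv_pow,
      inv_mul_eq_div]
    gcongr
    exact hbound i _

end Cutoff

section Schwartz

variable {E F : Type*} [NormedAddCommGroup E] [NormedSpace ℝ E] [NormedAddCommGroup F]
  [NormedSpace ℝ F]

lemma hasTemperateGrowth_of_bounded_iteratedFDeriv {g : E → F} (hg : ContDiff ℝ ∞ g)
    {C : ℕ → ℝ} (hC : ∀ i x, ‖iteratedFDeriv ℝ i g x‖ ≤ C i) : g.HasTemperateGrowth :=
  ⟨hg, fun i ↦ ⟨0, C i, by simpa using hC i⟩⟩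

lemma norm_iteratedFDeriv_one_sub_le {g : E → ℝ} {i : ℕ} (hg : ContDiff ℝ i g) (x : E) :
    ‖iteratedFDeriv ℝ i (fun y ↦ 1 - g y) x‖ ≤ 1 + ‖iteratedFDeriv ℝ i g x‖ := by
  rw [fun_iteratedFDeriv_sub_apply contDiffAt_const hg.contDiffAt]
  refine (norm_sub_le _ _).trans (add_le_add_left ?_ _)
  rcases eq_or_ne i 0 with rfl | hi
  · simp
  · simp [iteratedFDeriv_const_of_ne hi]

lemma seminorm_smulLeftCLM_le {u : E → ℝ} (hu : u.HasTemperateGrowth) (f : 𝓢(E, F)) {k n : ℕ}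
    {M : ℕ → ℝ} (hM : ∀ i x,
      ‖x‖ ^ k * (‖iteratedFDeriv ℝ i u x‖ * ‖iteratedFDeriv ℝ (n - i) f x‖) ≤ M i) :
    SchwartzMap.seminorm ℝ k n (SchwartzMap.smulLeftCLM F u f) ≤
      ∑ i ∈ Finset.range (n + 1), n.choose i * M i := by
  have hM0 (i : ℕ) : 0 ≤ M i := le_trans (by positivity) (hM i 0)
  refine SchwartzMap.seminorm_le_bound ℝ k n _
    (Finset.sum_nonneg fun i _ ↦ mul_nonneg (Nat.cast_nonneg _) (hM0 i)) fun x ↦ ?_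
  rw [SchwartzMap.smulLeftCLM_apply hu]
  calc ‖x‖ ^ k * ‖iteratedFDeriv ℝ n (fun y ↦ u y • f y) x‖
    _ ≤ ‖x‖ ^ k * ∑ i ∈ Finset.range (n + 1),
          n.choose i * ‖iteratedFDeriv ℝ i u x‖ * ‖iteratedFDeriv ℝ (n - i) f x‖ := by
        gcongr
        exact norm_iteratedFDeriv_smul_le hu.1 (f.smooth ⊤) x (by exact_mod_cast le_top)
    _ = ∑ i ∈ Finset.range (n + 1), n.choose i *
          (‖x‖ ^ k * (‖iteratedFDeriv ℝ i u x‖ * ‖iteratedFDeriv ℝ (n - i) f x‖)) := by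
        rw [Finset.mul_sum]
        exact Finset.sum_congr rfl fun i _ ↦ by ring
    _ ≤ ∑ i ∈ Finset.range (n + 1), n.choose i * M i := by
        gcongr with i
        exact hM i x

lemma tendsto_sub_smulLeftCLM {ι : Type*} {l : Filter ι} (f : 𝓢(E, F)) {u : ι → E → ℝ}
    (hu : ∀ a, (u a).HasTemperateGrowth)
    (h : ∀ k i j : ℕ, ∃ M : ι → ℝ, Tendsto M l (𝓝 0) ∧
      ∀ a x, ‖x‖ ^ k * (‖iteratedFDeriv ℝ i (u a) x‖ * ‖iteratedFDeriv ℝ j f x‖) ≤ M a) :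
    Tendsto (fun a ↦ f - SchwartzMap.smulLeftCLM F (u a) f) l (𝓝 f) := by
  suffices hzero : Tendsto (fun a ↦ SchwartzMap.smulLeftCLM F (u a) f) l (𝓝 0) by
    simpa only [sub_zero] using tendsto_const_nhds.sub hzero
  rw [(schwartz_withSeminorms ℝ E F).tendsto_nhds]
  rintro ⟨k, n⟩ ε hε
  choose M hMlim hM using fun i ↦ h k i (n - i)
  have hlim : Tendsto (fun a ↦ ∑ i ∈ Finset.range (n + 1), n.choose i * M i a) l (𝓝 0) := by
    simpa only [mul_zero, Finset.sum_const_zero] using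
      tendsto_finsetSum _ fun i _ ↦ (hMlim i).const_mul (n.choose i : ℝ)
  filter_upwards [hlim.eventually_lt_const hε] with a ha
  rw [sub_zero]
  exact (seminorm_smulLeftCLM_le (hu a) f fun i x ↦ hM i a x).trans_lt ha

variable (F) in
/-- The Schwartz functions that vanish to infinite order at every point of `Z`, generalizing `I0`
to an arbitrary set in place of `ℤ`. -/
def schwartzFlatOn (Z : Set E) : Set 𝓢(E, F) :=
  {f | ∀ z ∈ Z, ∀ j, iteratedFDeriv ℝ j f z = 0}

variable (F) in
/-- The Schwartz functions that vanish on a uniform neighbourhood of `Z`; those of compact support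
generalize `J0` to an arbitrary set in place of `ℤ`. -/
def schwartzVanishingNear (Z : Set E) : Set 𝓢(E, F) :=
  {f | ∃ ε > 0, EqOn f 0 (thickening ε Z)}

lemma norm_iteratedFDeriv_le_seminorm_mul_dist_pow (f : 𝓢(E, F)) {z : E}
    (hz : ∀ j, iteratedFDeriv ℝ j f z = 0) (m i : ℕ) (x : E) :
    ‖iteratedFDeriv ℝ i f x‖ ≤ SchwartzMap.seminorm ℝ 0 (i + m) f * dist x z ^ m := by
  induction m generalizing i x with
  | zero => simpa using f.norm_iteratedFDeriv_le_seminorm ℝ i x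
  | succ m ih =>
    have hderiv (y) (hy : y ∈ segment ℝ z x) : ‖fderiv ℝ (iteratedFDeriv ℝ i f) y‖ ≤
        SchwartzMap.seminorm ℝ 0 (i + (m + 1)) f * dist x z ^ m := by
      have hyx : dist y z ≤ dist x z := by
        simpa only [dist_eq_norm] using norm_sub_le_of_mem_segment hy
      have hind := ih (i + 1) y
      rw [Nat.add_right_comm, Nat.add_assoc] at hind
      rw [norm_fderiv_iteratedFDeriv]
      exact hind.trans (by gcongr)
    have hmvt := (convex_segment z x).norm_image_sub_le_of_norm_fderiv_le
      (fun y _ ↦ (((f.smooth ⊤).differentiable_iteratedFDeriv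
        (by exact_mod_cast ENat.natCast_lt_top i)).differentiableAt)) hderiv
      (left_mem_segment ℝ z x) (right_mem_segment ℝ z x)
    rwa [hz, sub_zero, ← dist_eq_norm, mul_assoc, ← pow_succ] at hmvt

lemma exists_pow_mul_norm_iteratedFDeriv_le_dist_pow {f : 𝓢(E, F)} {Z : Set E}
    (hf : f ∈ schwartzFlatOn F Z) (k i m : ℕ) : ∃ C, 0 ≤ C ∧ ∀ z ∈ Z, ∀ x,
      ‖x‖ ^ k * ‖iteratedFDeriv ℝ i f x‖ ≤ C * dist x z ^ m := by
  set S := SchwartzMap.seminorm ℝ (2 * k) i f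
  set T := SchwartzMap.seminorm ℝ 0 (i + 2 * m) f
  refine ⟨√(S * T), Real.sqrt_nonneg _, fun z hz x ↦ ?_⟩
  -- Interpolate between the decay at infinity and the flatness at `z`.
  refine le_of_sq_le_sq ?_ (by positivity)
  calc (‖x‖ ^ k * ‖iteratedFDeriv ℝ i f x‖) ^ 2
    _ = ‖x‖ ^ (2 * k) * ‖iteratedFDeriv ℝ i f x‖ * ‖iteratedFDeriv ℝ i f x‖ := by ring
    _ ≤ S * (T * dist x z ^ (2 * m)) := by
        gcongr
        · exact f.le_seminorm ℝ (2 * k) i x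
        · exact norm_iteratedFDeriv_le_seminorm_mul_dist_pow f (hf z hz) (2 * m) i x
    _ = (√(S * T) * dist x z ^ m) ^ 2 := by
        rw [mul_pow, Real.sq_sqrt (by positivity)]
        ring

lemma exists_pow_mul_norm_iteratedFDeriv_mul_le_mul {f : 𝓢(E, F)} {Z : Set E}
    (hf : f ∈ schwartzFlatOn F Z) (k i j : ℕ) {C : ℝ} (hC : 0 ≤ C) :
    ∃ M, ∀ δ > 0, ∀ χ : E → ℝ, support χ ⊆ thickening (3 * δ) Z →
      (∀ x, ‖iteratedFDeriv ℝ i χ x‖ ≤ C / δ ^ i) →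
      ∀ x, ‖x‖ ^ k * (‖iteratedFDeriv ℝ i χ x‖ * ‖iteratedFDeriv ℝ j f x‖) ≤ M * δ := by
  obtain ⟨B, hB, hflat⟩ := exists_pow_mul_norm_iteratedFDeriv_le_dist_pow hf k j (i + 1)
  refine ⟨C * B * 4 ^ (i + 1), fun δ hδ χ hsupp hbound x ↦ ?_⟩
  by_cases hx : x ∈ tsupport χ
  · have hthick : x ∈ thickening (4 * δ) Z :=
      cthickening_subset_thickening' (by positivity) (by linarith) Z
        (closure_thickening_subset_cthickening _ Z (closure_mono hsupp hx))
    obtain ⟨z, hz, hxz⟩ := mem_thickening_iff.1 hthick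
    calc ‖x‖ ^ k * (‖iteratedFDeriv ℝ i χ x‖ * ‖iteratedFDeriv ℝ j f x‖)
      _ = ‖iteratedFDeriv ℝ i χ x‖ * (‖x‖ ^ k * ‖iteratedFDeriv ℝ j f x‖) := by ring
      _ ≤ C / δ ^ i * (B * dist x z ^ (i + 1)) :=
          mul_le_mul (hbound x) (hflat z hz x) (by positivity) (by positivity)
      _ ≤ C / δ ^ i * (B * (4 * δ) ^ (i + 1)) := by gcongr
      _ = C * B * 4 ^ (i + 1) * δ := by
          rw [mul_pow, pow_succ δ]
          field_simp
  · rw [notMem_support.1 (notMem_subset (support_iteratedFDeriv_subset i) hx), norm_zero, zero_mul,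
      mul_zero]
    positivity

lemma pow_mul_norm_iteratedFDeriv_mul_le_div (f : 𝓢(E, F)) (k j : ℕ) {i : ℕ} {u : E → ℝ} {C R : ℝ}
    (hR : 0 < R) (hsupp : Disjoint (support u) (ball 0 R))
    (hbound : ∀ x, ‖iteratedFDeriv ℝ i u x‖ ≤ C) (x : E) :
    ‖x‖ ^ k * (‖iteratedFDeriv ℝ i u x‖ * ‖iteratedFDeriv ℝ j f x‖) ≤
      C * SchwartzMap.seminorm ℝ (k + 1) j f / R := by
  have hC : 0 ≤ C := (norm_nonneg _).trans (hbound 0)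
  by_cases hx : x ∈ tsupport u
  · have hRx : R ≤ ‖x‖ := by
      simpa using (hsupp.closure_left isOpen_ball).notMem_of_mem_left hx
    rw [le_div_iff₀ hR]
    calc ‖x‖ ^ k * (‖iteratedFDeriv ℝ i u x‖ * ‖iteratedFDeriv ℝ j f x‖) * R
      _ = ‖iteratedFDeriv ℝ i u x‖ * (‖x‖ ^ k * R * ‖iteratedFDeriv ℝ j f x‖) := by ring
      _ ≤ C * (‖x‖ ^ k * ‖x‖ * ‖iteratedFDeriv ℝ j f x‖) := by
          gcongr
          exact hbound x
      _ ≤ C * SchwartzMap.seminorm ℝ (k + 1) j f := by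
          rw [← pow_succ]
          gcongr
          exact f.le_seminorm ℝ (k + 1) j x
  · rw [notMem_support.1 (notMem_subset (support_iteratedFDeriv_subset i) hx), norm_zero, zero_mul,
      mul_zero]
    positivity

variable [FiniteDimensional ℝ E]

lemma schwartzFlatOn_subset_closure_schwartzVanishingNear (Z : Set E) :
    schwartzFlatOn F Z ⊆ closure (schwartzVanishingNear F Z) := by
  intro f hf
  let δ (N : ℕ) : ℝ := 1 / (N + 1)
  have hδ (N : ℕ) : 0 < δ N := Nat.one_div_pos_of_nat
  have hδlim : Tendsto δ atTop (𝓝 0) := tendsto_one_div_add_atTop_nhds_zero_nat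
  obtain ⟨C, hC₀, hC⟩ := exists_thickening_cutoff E
  choose χ hχ hone hsupp hbound using fun N ↦ hC Z (δ N) (hδ N)
  have hχtemp (N : ℕ) : (χ N).HasTemperateGrowth :=
    hasTemperateGrowth_of_bounded_iteratedFDeriv (hχ N) (hbound N)
  refine mem_closure_of_tendsto (tendsto_sub_smulLeftCLM (l := atTop) f hχtemp fun k i j ↦ ?_)
    (.of_forall fun N ↦ ⟨δ N, hδ N, fun x hx ↦ ?_⟩)
  · obtain ⟨M, hM⟩ := exists_pow_mul_norm_iteratedFDeriv_mul_le_mul hf k i j (hC₀ i)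
    exact ⟨fun N ↦ M * δ N, by simpa only [mul_zero] using hδlim.const_mul M,
      fun N ↦ hM (δ N) (hδ N) (χ N) (hsupp N) (hbound N i)⟩
  · simp [SchwartzMap.smulLeftCLM_apply_apply (hχtemp N), hone N hx]

lemma mem_closure_hasCompactSupport_support_subset (f : 𝓢(E, F)) :
    f ∈ closure {g : 𝓢(E, F) | HasCompactSupport g ∧ support g ⊆ support f} := by
  let R (N : ℕ) : ℝ := N + 1
  have hR (N : ℕ) : 0 < R N := Nat.cast_add_one_pos N
  have hRlim : Tendsto R atTop atTop :=
    tendsto_atTop_add_const_right _ _ tendsto_natCast_atTop_atTop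
  obtain ⟨C, hC₀, hC⟩ := exists_thickening_cutoff E
  choose χ hχ hone hsupp hbound using fun N ↦ hC {0} (R N) (hR N)
  simp only [thickening_singleton] at hone hsupp
  have hbound' (N i x) : ‖iteratedFDeriv ℝ i (fun y ↦ 1 - χ N y) x‖ ≤ 1 + C i := by
    refine (norm_iteratedFDeriv_one_sub_le ((hχ N).of_le (by exact_mod_cast le_top)) x).trans ?_
    gcongr
    exact (hbound N i x).trans (div_le_self (hC₀ i) (one_le_pow₀ (by simp [R])))
  have htemp (N : ℕ) : (fun y ↦ 1 - χ N y).HasTemperateGrowth :=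
    hasTemperateGrowth_of_bounded_iteratedFDeriv (contDiff_const.sub (hχ N)) (hbound' N)
  refine mem_closure_of_tendsto (tendsto_sub_smulLeftCLM (l := atTop) f htemp fun k i j ↦ ?_)
    (.of_forall fun N ↦ ?_)
  · refine ⟨fun N ↦ (1 + C i) * SchwartzMap.seminorm ℝ (k + 1) j f / R N, hRlim.const_div_atTop _,
      fun N ↦ pow_mul_norm_iteratedFDeriv_mul_le_div f k j (hR N) ?_ (hbound' N i)⟩
    exact disjoint_left.2 fun x hx hxR ↦ hx (by simp [hone N hxR])
  · have happly (x : E) :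
        (f - SchwartzMap.smulLeftCLM F (fun y ↦ 1 - χ N y) f) x = χ N x • f x := by
      simp [SchwartzMap.smulLeftCLM_apply_apply (htemp N), sub_smul]
    refine ⟨.of_support_subset_isCompact (isCompact_closedBall 0 (3 * R N)) fun x hx ↦ ?_,
      fun x hx ↦ ?_⟩
    · rw [mem_support, happly] at hx
      exact ball_subset_closedBall (hsupp N (left_ne_zero_of_smul hx))
    · rw [mem_support, happly] at hx
      exact right_ne_zero_of_smul hx

theorem J0_dense_in_I0_general (Z : Set E) :
    schwartzFlatOn F Z ⊆
      closure ({f : 𝓢(E, F) | HasCompactSupport f} ∩ schwartzVanishingNear F Z) := by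
  refine (schwartzFlatOn_subset_closure_schwartzVanishingNear Z).trans
    (closure_minimal ?_ isClosed_closure)
  rintro f ⟨ε, hε, hf⟩
  refine closure_mono ?_ (mem_closure_hasCompactSupport_support_subset f)
  rintro g ⟨hgc, hgf⟩
  exact ⟨hgc, ε, hε, fun x hx ↦ notMem_support.1 fun hgx ↦ hgf hgx (hf hx)⟩

end Schwartz

lemma I0_eq_schwartzFlatOn : I0 = schwartzFlatOn ℂ (range ((↑) : ℤ → ℝ)) := by
  ext f
  simp only [I0, schwartzFlatOn, mem_ofPred_eq, forall_mem_range,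
    ← norm_eq_zero (a := iteratedFDeriv _ _ _ _), norm_iteratedFDeriv_eq_norm_iteratedDeriv,
    norm_eq_zero]

lemma J0_eq_hasCompactSupport_inter_schwartzVanishingNear :
    J0 = {f : 𝓢(ℝ, ℂ) | HasCompactSupport f} ∩ schwartzVanishingNear ℂ (range ((↑) : ℤ → ℝ)) := by
  ext f
  simp [J0, schwartzVanishingNear, EqOn, mem_thickening_iff, Real.dist_eq]

/-- `J₀(ℝ)` is dense in `I₀(ℝ)` for the Schwartz space topology. -/
theorem J0_dense_in_I0 : I0 ⊆ closure J0 := by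
  rw [I0_eq_schwartzFlatOn, J0_eq_hasCompactSupport_inter_schwartzVanishingNear]
  exact J0_dense_in_I0_general _
end
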